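/- In a growth order group G (an ordered group satisfying GOG1, GOG2, and GOG3), the centraliser of every non-trivial element is Abelian; consequently any non-Abelian growth order group has trivial center. -/

import Mathlib

namespace GOG

variable {α : Type*}

/-- Centraliser of `g` with respect to an abstract multiplication. -/
def Cent (mul : α → α → α) (g : α) : Set α := {h | mul h g = mul g h}

/-- `f ≼ g`: `f` lies in the convex hull of the centraliser of `g` (or `f = 1`). -/
def Preceq (mul : α → α → α) (one : α) (le : α → α → Prop) (f g : α) : Prop :=
  f = one ∨ (g ≠ one ∧ ∃ a ∈ Cent mul g, ∃ b ∈ Cent mul g, le a f ∧ le f b)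

/-- Strict part `f ≺ g`. -/
def Prec (mul : α → α → α) (one : α) (le : α → α → Prop) (f g : α) : Prop :=
  Preceq mul one le f g ∧ ¬ Preceq mul one le g f

/-- `f ≍ g`. -/
def Asymp (mul : α → α → α) (one : α) (le : α → α → Prop) (f g : α) : Prop :=
  Preceq mul one le f g ∧ Preceq mul one le g f

/-- `g ∼ h` iff `g h⁻¹ ≺ g`. -/
def Sim (mul : α → α → α) (one : α) (inv : α → α) (le : α → α → Prop) (g h : α) : Prop :=
  Prec mul one le (mul g (inv h)) g

/-- Axiom GOG1. -/
def GOG1 (mul : α → α → α) (one : α) (lt le : α → α → Prop) : Prop :=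
  ∀ f g : α, lt one f → lt one g → le g f →
    ∀ g₀ ∈ Cent mul g, ∃ f₀ ∈ Cent mul f, le g₀ f₀

/-- Axiom GOG2: if `f > C(g)` then `f g > g f`. -/
def GOG2 (mul : α → α → α) (one : α) (lt : α → α → Prop) : Prop :=
  ∀ f g : α, lt one f → lt one g → (∀ h ∈ Cent mul g, lt h f) → lt (mul g f) (mul f g)

/-- `s` is a scaling element. -/
def Scaling (mul : α → α → α) (one : α) (inv : α → α) (lt le : α → α → Prop) (s : α) : Prop :=
  lt one s ∧ (∀ a ∈ Cent mul s, ∀ b ∈ Cent mul s, mul a b = mul b a) ∧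
    ∀ f : α, Asymp mul one le f s → ∃ g ∈ Cent mul s, g ≠ one ∧ Sim mul one inv le g f

/-- Axiom GOG3: every growth rank contains a scaling element. -/
def GOG3 (mul : α → α → α) (one : α) (inv : α → α) (lt le : α → α → Prop) : Prop :=
  ∀ g : α, g ≠ one → ∃ s : α, Scaling mul one inv lt le s ∧ Asymp mul one le s g

/-- Being a (bi-ordered) linearly ordered group, for abstract operations. -/
def IsOrderedGroup (mul : α → α → α) (one : α) (inv : α → α) (lt : α → α → Prop) : Prop :=
  (∀ a b c : α, mul (mul a b) c = mul a (mul b c)) ∧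
    (∀ a : α, mul one a = a) ∧ (∀ a : α, mul a one = a) ∧
    (∀ a : α, mul (inv a) a = one) ∧
    (∀ a : α, ¬ lt a a) ∧ (∀ a b c : α, lt a b → lt b c → lt a c) ∧
    (∀ a b : α, lt a b ∨ a = b ∨ lt b a) ∧
    (∀ f g h : α, lt g h → lt (mul f g) (mul f h) ∧ lt (mul g f) (mul h f))

/-- Growth order group: ordered group satisfying GOG1, GOG2 and GOG3. -/
def IsGrowthOrderGroup (mul : α → α → α) (one : α) (inv : α → α) (lt le : α → α → Prop) : Prop :=
  IsOrderedGroup mul one inv lt ∧ GOG1 mul one lt le ∧ GOG2 mul one lt ∧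
    GOG3 mul one inv lt le

end GOG

namespace GOG

theorem one_le_max_inv {G : Type*} [Group G] [LinearOrder G] [MulLeftStrictMono G] (g : G) :
    1 ≤ max g g⁻¹ := by
  have := mulLeftMono_of_mulLeftStrictMono G
  rcases le_total 1 g with h | h
  · exact le_max_of_le_left h
  · exact le_max_of_le_right (one_le_inv'.2 h)

section

variable {G : Type*} [Group G] [LinearOrder G] [MulLeftStrictMono G] [MulRightStrictMono G]

/-- The convex hull of the centraliser of `g`, with the convention that it is trivial when `g = 1`:
the set of all `f` with `f ≼ g`. -/
def centHull (g : G) : Subgroup G where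
  carrier := {f | Preceq (· * ·) (1 : G) (· ≤ ·) f g}
  one_mem' := Or.inl rfl
  mul_mem' := by
    have := mulLeftMono_of_mulLeftStrictMono G
    have := mulRightMono_of_mulRightStrictMono G
    rintro f f' (rfl | ⟨hg, a, ha, b, hb, haf, hfb⟩) hf'
    · simpa using hf'
    · rcases hf' with rfl | ⟨-, a', ha', b', hb', haf', hfb'⟩
      · exact Or.inr ⟨hg, a, ha, b, hb, by simpa using haf, by simpa using hfb⟩
      · exact Or.inr ⟨hg, a * a', Commute.mul_left ha ha', b * b', Commute.mul_left hb hb',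
          mul_le_mul' haf haf', mul_le_mul' hfb hfb'⟩
  inv_mem' := by
    have := mulLeftMono_of_mulLeftStrictMono G
    have := mulRightMono_of_mulRightStrictMono G
    rintro f (rfl | ⟨hg, a, ha, b, hb, haf, hfb⟩)
    · exact Or.inl (by simp)
    · exact Or.inr ⟨hg, b⁻¹, Commute.inv_left hb, a⁻¹, Commute.inv_left ha,
        inv_le_inv_iff.2 hfb, inv_le_inv_iff.2 haf⟩

theorem mem_centHull_of_commute {f g : G} (hg : g ≠ 1) (h : Commute f g) : f ∈ centHull g :=
  Or.inr ⟨hg, f, h, f, h, le_rfl, le_rfl⟩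

theorem self_mem_centHull (g : G) : g ∈ centHull g := by
  by_cases hg : g = 1
  · exact Or.inl hg
  · exact mem_centHull_of_commute hg (Commute.refl g)

theorem eq_one_of_mem_centHull_one {f : G} (h : f ∈ centHull (1 : G)) : f = 1 :=
  h.elim id fun h => absurd rfl h.1

theorem mem_centHull_of_between {a f b g : G} (ha : a ∈ centHull g) (hb : b ∈ centHull g)
    (haf : a ≤ f) (hfb : f ≤ b) : f ∈ centHull g := by
  by_cases hg : g = 1
  · subst hg
    rw [eq_one_of_mem_centHull_one ha] at haf
    rw [eq_one_of_mem_centHull_one hb] at hfb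
    exact Or.inl (le_antisymm hfb haf)
  · have bounds {x : G} (hx : x ∈ centHull g) :
        ∃ p ∈ Cent (· * ·) g, ∃ q ∈ Cent (· * ·) g, p ≤ x ∧ x ≤ q := by
      rcases hx with rfl | hx
      · exact ⟨1, Commute.one_left g, 1, Commute.one_left g, le_rfl, le_rfl⟩
      · exact hx.2
    obtain ⟨p, hp, -, -, hpa, -⟩ := bounds ha
    obtain ⟨-, -, q, hq, -, hbq⟩ := bounds hb
    exact Or.inr ⟨hg, p, hp, q, hq, hpa.trans haf, hfb.trans hbq⟩

theorem centHull_le_of_cent_subset {f g : G} (hf : f ≠ 1)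
    (h : ∀ a, Commute a g → Commute a f) : centHull g ≤ centHull f := by
  rintro x (rfl | ⟨-, a, ha, b, hb, hax, hxb⟩)
  · exact one_mem _
  · exact Or.inr ⟨hf, a, h a ha, b, h b hb, hax, hxb⟩

theorem centHull_inv (g : G) : centHull g⁻¹ = centHull g := by
  by_cases hg : g = 1
  · simp [hg]
  · exact le_antisymm
      (centHull_le_of_cent_subset hg fun a ha => by simpa using ha.inv_right)
      (centHull_le_of_cent_subset (inv_ne_one.2 hg) fun a ha => ha.inv_right)

theorem conj_mem_centHull {f g : G} (t : G) (h : f ∈ centHull g) :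
    t * f * t⁻¹ ∈ centHull (t * g * t⁻¹) := by
  have := mulLeftMono_of_mulLeftStrictMono G
  have := mulRightMono_of_mulRightStrictMono G
  rcases h with rfl | ⟨hg, a, ha, b, hb, haf, hfb⟩
  · simp [one_mem]
  · exact Or.inr ⟨by simpa using hg, t * a * t⁻¹, (Commute.conj_iff t).2 ha,
      t * b * t⁻¹, (Commute.conj_iff t).2 hb,
      mul_le_mul_left (mul_le_mul_right haf t) t⁻¹, mul_le_mul_left (mul_le_mul_right hfb t) t⁻¹⟩

theorem commute_of_commute_mul_self {a g : G} (h : Commute a (g * g)) : Commute a g := by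
  have hsq : (a * g * a⁻¹) * (a * g * a⁻¹) = g * g := by
    have := h.eq
    calc (a * g * a⁻¹) * (a * g * a⁻¹) = a * (g * g) * a⁻¹ := by group
      _ = g * g := by rw [this]; group
  have key : a * g * a⁻¹ = g := by
    rcases lt_trichotomy (a * g * a⁻¹) g with hlt | heq | hgt
    · exact absurd hsq (mul_lt_mul_of_lt_of_lt hlt hlt).ne
    · exact heq
    · exact absurd hsq (mul_lt_mul_of_lt_of_lt hgt hgt).ne'
  exact mul_inv_eq_iff_eq_mul.1 key

theorem centHull_mul_self_le (g : G) : centHull (g * g) ≤ centHull g := by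
  by_cases hg : g = 1
  · simp [hg]
  · exact centHull_le_of_cent_subset hg fun a ha => commute_of_commute_mul_self ha

theorem centHull_max_inv (g : G) : centHull (max g g⁻¹) = centHull g := by
  rcases max_choice g g⁻¹ with h | h <;> rw [h]
  exact centHull_inv g

theorem centHull_mono (h1 : GOG1 (· * ·) (1 : G) (· < ·) (· ≤ ·)) {f g : G} (hg : 1 ≤ g)
    (hgf : g ≤ f) : centHull g ≤ centHull f := by
  have := mulLeftMono_of_mulLeftStrictMono G
  have := mulRightMono_of_mulRightStrictMono G
  rcases hg.eq_or_lt with rfl | hg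
  · intro x hx
    rw [eq_one_of_mem_centHull_one hx]
    exact one_mem _
  have hf := hg.trans_le hgf
  rintro x (rfl | ⟨-, a, ha, b, hb, hax, hxb⟩)
  · exact one_mem _
  obtain ⟨p, hp, hap⟩ := h1 f g hf hg hgf a⁻¹ (Commute.inv_left ha)
  obtain ⟨q, hq, hbq⟩ := h1 f g hf hg hgf b hb
  exact Or.inr ⟨hf.ne', p⁻¹, Commute.inv_left hp, q, hq, (inv_le'.1 hap).trans hax,
    hxb.trans hbq⟩

theorem centHull_mono_of_between (h1 : GOG1 (· * ·) (1 : G) (· < ·) (· ≤ ·)) {f m : G}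
    (hfm : f ≤ m) (hfm' : f⁻¹ ≤ m) : centHull f ≤ centHull m := by
  rw [← centHull_max_inv f]
  exact centHull_mono h1 (one_le_max_inv f) (max_le hfm hfm')

theorem centHull_total (h1 : GOG1 (· * ·) (1 : G) (· < ·) (· ≤ ·)) (f g : G) :
    centHull f ≤ centHull g ∨ centHull g ≤ centHull f := by
  rw [← centHull_max_inv f, ← centHull_max_inv g]
  exact (le_total (max f f⁻¹) (max g g⁻¹)).imp (centHull_mono h1 (one_le_max_inv f))
    (centHull_mono h1 (one_le_max_inv g))

theorem centHull_mul_le (h1 : GOG1 (· * ·) (1 : G) (· < ·) (· ≤ ·)) (f g : G) :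
    centHull (f * g) ≤ centHull f ∨ centHull (f * g) ≤ centHull g := by
  have := mulLeftMono_of_mulLeftStrictMono G
  have := mulRightMono_of_mulRightStrictMono G
  have key {m : G} (hf : max f f⁻¹ ≤ m) (hg : max g g⁻¹ ≤ m) :
      centHull (f * g) ≤ centHull m := by
    rw [max_le_iff] at hf hg
    refine (centHull_mono_of_between h1 (mul_le_mul' hf.1 hg.1) ?_).trans
      (centHull_mul_self_le m)
    rw [mul_inv_rev]
    exact mul_le_mul' hg.2 hf.2
  rw [← centHull_max_inv f, ← centHull_max_inv g]
  exact (le_total (max f f⁻¹) (max g g⁻¹)).symm.imp (key le_rfl) fun h => key h le_rfl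

theorem notMem_centHull_mul (h1 : GOG1 (· * ·) (1 : G) (· < ·) (· ≤ ·)) {f g x : G}
    (hf : x ∉ centHull f) (hg : x ∉ centHull g) : x ∉ centHull (f * g) := fun h =>
  (centHull_mul_le h1 f g).elim (fun hle => hf (hle h)) fun hle => hg (hle h)

theorem centHull_mul_le_of_le (h1 : GOG1 (· * ·) (1 : G) (· < ·) (· ≤ ·)) {f g x : G}
    (hf : centHull f ≤ centHull x) (hg : centHull g ≤ centHull x) :
    centHull (f * g) ≤ centHull x :=
  (centHull_mul_le h1 f g).elim (·.trans hf) (·.trans hg)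

theorem Scaling.exists_commute {s f : G}
    (hs : Scaling (· * ·) (1 : G) (·⁻¹) (· < ·) (· ≤ ·) s)
    (hfs : f ∈ centHull s) (hsf : s ∈ centHull f) :
    ∃ u : G, Commute (u * f) s ∧ f ∉ centHull u ∧ u * f ∉ centHull u := by
  obtain ⟨g, hg, -, hsim⟩ := hs.2.2 f ⟨hfs, hsf⟩
  replace hg : Commute g s := hg
  have hmem : g ∉ centHull (g * f⁻¹) := hsim.2
  refine ⟨g * f⁻¹, by simpa using hg, fun h => hmem ?_, by simpa using hmem⟩
  simpa using mul_mem (self_mem_centHull (g * f⁻¹)) h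

theorem Scaling.centHull_le_of_commute {s k : G}
    (hs : Scaling (· * ·) (1 : G) (·⁻¹) (· < ·) (· ≤ ·) s) (hk : k ≠ 1) (hks : Commute k s) :
    centHull s ≤ centHull k :=
  centHull_le_of_cent_subset hk fun a ha => hs.2.1 a ha k hks

theorem Scaling.centHull_le_of_mem {s c h : G}
    (h1 : GOG1 (· * ·) (1 : G) (· < ·) (· ≤ ·))
    (hs : Scaling (· * ·) (1 : G) (·⁻¹) (· < ·) (· ≤ ·) s)
    (hch : c ∈ centHull h) (hlt : ¬ centHull c ≤ centHull h)
    (hcs : c ∈ centHull s) (hsc : s ∈ centHull c) : centHull s ≤ centHull h := by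
  by_contra hsh
  have hhs := (centHull_total h1 s h).resolve_left hsh
  have hhc := (centHull_total h1 c h).resolve_left hlt
  have hle : centHull c ≤ centHull (h * c) := by
    have := centHull_mul_le h1 h⁻¹ (h * c)
    rw [inv_mul_cancel_left, centHull_inv] at this
    exact this.resolve_left hlt
  have notLe {u x : G} (hx : x ∈ centHull h) (hu : x ∉ centHull u) :
      ¬ centHull h ≤ centHull u := fun hle => hu (hle hx)
  obtain ⟨u, hus, hcu, -⟩ := hs.exists_commute hcs hsc
  obtain ⟨w, hws, hcw, -⟩ := hs.exists_commute
    (mul_mem (hhs (self_mem_centHull h)) hcs) (hle hsc)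
  have hu := notLe hch hcu
  have hw := notLe (mul_mem (self_mem_centHull h) hch) hcw
  have hk : Commute (w * h * u⁻¹) s := by
    have := hws.mul_left hus.inv_left
    rwa [show w * (h * c) * (u * c)⁻¹ = w * h * u⁻¹ by group] at this
  by_cases hk1 : w * h * u⁻¹ = 1
  · have hh : h = w⁻¹ * u := by
      rw [mul_inv_eq_one] at hk1
      rw [← hk1, inv_mul_cancel_left]
    have := centHull_mul_le h1 w⁻¹ u
    rw [← hh, centHull_inv] at this
    exact this.elim hw hu
  · refine hsh ((hs.centHull_le_of_commute hk1 hk).trans ?_)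
    refine centHull_mul_le_of_le h1 (centHull_mul_le_of_le h1 ?_ le_rfl) ?_
    · exact (centHull_total h1 w h).resolve_right hw
    · rw [centHull_inv]
      exact (centHull_total h1 u h).resolve_right hu

/-- Transitivity of the relation `≼`. -/
theorem centHull_le_of_mem (h1 : GOG1 (· * ·) (1 : G) (· < ·) (· ≤ ·))
    (h3 : GOG3 (· * ·) (1 : G) (·⁻¹) (· < ·) (· ≤ ·)) {c h : G} (hch : c ∈ centHull h) :
    centHull c ≤ centHull h := by
  by_contra hlt
  have hc : c ≠ 1 := by
    rintro rfl
    refine hlt fun x hx => ?_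
    rw [eq_one_of_mem_centHull_one hx]
    exact one_mem _
  obtain ⟨x, hxc, hxh⟩ : ∃ x, Commute x c ∧ x ∉ centHull h := by
    by_contra! hall
    refine hlt ?_
    rintro y (rfl | ⟨-, a, ha, b, hb, hay, hyb⟩)
    · exact one_mem _
    · exact mem_centHull_of_between (hall a ha) (hall b hb) hay hyb
  have hx : x ≠ 1 := by
    rintro rfl
    exact hxh (one_mem _)
  have hxmem : x ∈ centHull c := mem_centHull_of_commute hc hxc
  obtain ⟨s, hs, hsx, hxs⟩ := h3 x hx
  change s ∈ centHull x at hsx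
  change x ∈ centHull s at hxs
  have hsh : ¬ centHull s ≤ centHull h := fun hle => hxh (hle hxs)
  have hhs := (centHull_total h1 s h).resolve_left hsh
  have hsc : s ∉ centHull c := fun hsc =>
    hsh (hs.centHull_le_of_mem h1 hch hlt (hhs hch) hsc)
  have hxc' : ¬ centHull x ≤ centHull c := fun hle => hsc (hle hsx)
  exact hsc (hs.centHull_le_of_mem h1 hxmem hxc' hxs hsx (self_mem_centHull s))

theorem cent_commutative (h1 : GOG1 (· * ·) (1 : G) (· < ·) (· ≤ ·))
    (h3 : GOG3 (· * ·) (1 : G) (·⁻¹) (· < ·) (· ≤ ·)) {g a b : G} (hg : g ≠ 1)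
    (ha : Commute a g) (hb : Commute b g) : Commute a b := by
  obtain ⟨s, hs, hsg, hgs⟩ := h3 g hg
  have hsg' : centHull s ≤ centHull g := centHull_le_of_mem h1 h3 hsg
  have hgs' : centHull g ≤ centHull s := centHull_le_of_mem h1 h3 hgs
  have approx {f : G} (hf : Commute f g) : ∃ u, Commute (u * f) s ∧ g ∉ centHull u := by
    by_cases hf1 : f = 1
    · refine ⟨1, by simp [hf1], fun h => hg (eq_one_of_mem_centHull_one h)⟩
    · have hgf : centHull g ≤ centHull f :=
        centHull_le_of_mem h1 h3 (mem_centHull_of_commute hf1 hf.symm)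
      obtain ⟨u, hu, -, hfu⟩ := hs.exists_commute (hgs' (mem_centHull_of_commute hg hf))
        (hgf hsg)
      exact ⟨u, hu, fun hgu => hfu (centHull_le_of_mem h1 h3 hgu
        (hsg' (mem_centHull_of_commute hs.1.ne' hu)))⟩
  have conj {t y : G} (ht : Commute t g) (hy : g ∉ centHull y) :
      g ∉ centHull (t * y * t⁻¹) := fun hmem => hy <| by
    have := conj_mem_centHull t⁻¹ hmem
    rwa [show t⁻¹ * (t * y * t⁻¹) * t⁻¹⁻¹ = y by group, ht.inv_left.eq, inv_inv,
      inv_mul_cancel_right] at this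
  have inv {y : G} (hy : g ∉ centHull y) : g ∉ centHull y⁻¹ := by rwa [centHull_inv]
  obtain ⟨u, hu, hgu⟩ := approx ha
  obtain ⟨w, hw, hgw⟩ := approx hb
  have hcomm : (u * a) * (w * b) = (w * b) * (u * a) := hs.2.1 _ hu _ hw
  have hk : g ∉ centHull (a * b * (b * a)⁻¹) := by
    have heq : a * b * (b * a)⁻¹ =
        (a * w⁻¹ * a⁻¹) * u⁻¹ * w * (b * u⁻¹ * b⁻¹)⁻¹ := by
      calc a * b * (b * a)⁻¹
          = (a * w⁻¹ * a⁻¹) * u⁻¹ * ((u * a) * (w * b)) * (b * a)⁻¹ := by group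
        _ = (a * w⁻¹ * a⁻¹) * u⁻¹ * ((w * b) * (u * a)) * (b * a)⁻¹ := by rw [hcomm]
        _ = _ := by group
    rw [heq]
    exact notMem_centHull_mul h1 (notMem_centHull_mul h1 (notMem_centHull_mul h1
      (conj ha (inv hgw)) (inv hgu)) hgw) (inv (conj hb (inv hgu)))
  have hkg : Commute (a * b * (b * a)⁻¹) g :=
    (ha.mul_left hb).mul_left (hb.mul_left ha).inv_left
  by_contra hne
  exact hk (mem_centHull_of_commute (fun h => hne (mul_inv_eq_one.1 h)) hkg.symm)

end

end GOG

theorem stmt_12 {G : Type*} [Group G] [LinearOrder G]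
    [CovariantClass G G (· * ·) (· < ·)]
    [CovariantClass G G (Function.swap (· * ·)) (· < ·)]
    (h1 : GOG.GOG1 (· * ·) (1 : G) (· < ·) (· ≤ ·))
    (h2 : GOG.GOG2 (· * ·) (1 : G) (· < ·))
    (h3 : GOG.GOG3 (· * ·) (1 : G) (·⁻¹) (· < ·) (· ≤ ·)) :
    (∀ g : G, g ≠ 1 → ∀ a ∈ GOG.Cent (· * ·) g, ∀ b ∈ GOG.Cent (· * ·) g,
      a * b = b * a) ∧
    ((∃ a b : G, a * b ≠ b * a) → ∀ z : G, (∀ y : G, z * y = y * z) → z = 1) := by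
  have : MulLeftStrictMono G := ⟨fun a _ _ h => CovariantClass.elim (μ := (· * ·)) a h⟩
  have : MulRightStrictMono G :=
    ⟨fun a _ _ h => CovariantClass.elim (μ := Function.swap (· * ·)) a h⟩
  refine ⟨fun g hg a ha b hb => GOG.cent_commutative h1 h3 hg ha hb, ?_⟩
  rintro ⟨a, b, hab⟩ z hz
  by_contra hz1
  exact hab (GOG.cent_commutative h1 h3 hz1 (hz a).symm (hz b).symm)
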